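/- Suppose a sequence of prediction sets {Ĉ_{n,α}}_{n≥1} satisfies limsup_{n→∞} sup_{P ∈ P_SI} P_P(Δ ∉ Ĉ_{n,α}(X)) ≤ α for some α ∈ (0,1). Then for every P ∈ P_SI and every y ∈ ℝ, limsup_{n→∞} P_P(y ∉ Ĉ_{n,α}(X)) ≤ α; consequently, for every P ∈ P_SI, lim_{n→∞} E_P[length(Ĉ_{n,α}(X))] = ∞. -/

import Mathlib

/-!
STATEMENT 0 (no-free-lunch for conditional independence testing, finite sample):
If a (possibly randomized) test `ψ : D^n → [0,1]` on the full data
`(X, Y(1), Y(0), T)` has level `α` over the strong-ignorability class `P_SI`,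
then it has level `α` over the whole class `E`.
-/

open MeasureTheory ProbabilityTheory Filter

noncomputable section

/-- The full-data sample space `D = ℝ^p × ℝ² × {0,1}`. -/
abbrev FullData (p : ℕ) : Type := (Fin p → ℝ) × ℝ × ℝ × Bool

/-- Covariate coordinate. -/
def Xc {p : ℕ} (ω : FullData p) : Fin p → ℝ := ω.1

/-- Treated potential outcome coordinate `Y(1)`. -/
def Y1c {p : ℕ} (ω : FullData p) : ℝ := ω.2.1

/-- Control potential outcome coordinate `Y(0)`. -/
def Y0c {p : ℕ} (ω : FullData p) : ℝ := ω.2.2.1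

/-- Treatment coordinate `T`. -/
def Tc {p : ℕ} (ω : FullData p) : Bool := ω.2.2.2

lemma measurable_Xc {p : ℕ} : Measurable (Xc (p := p)) := measurable_fst

/-- The σ-algebra generated by the covariates `X`. -/
def mX (p : ℕ) : MeasurableSpace (FullData p) :=
  MeasurableSpace.comap Xc inferInstance

lemma mX_le (p : ℕ) : mX p ≤ (inferInstance : MeasurableSpace (FullData p)) := measurable_Xc.comap_le

/-- The class `E`: distributions of `(X, Y(1), Y(0), T)` such that at least one coordinate
of `X` has a law absolutely continuous w.r.t. Lebesgue measure, and the laws of `Y(1)` and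
`Y(0)` are atomless (continuous). -/
def memE {p : ℕ} (P : ProbabilityMeasure (FullData p)) : Prop :=
  (∃ j : Fin p,
    ((P : Measure (FullData p)).map (fun ω => Xc ω j)).AbsolutelyContinuous
      (volume : Measure ℝ)) ∧
  (∀ y : ℝ, ((P : Measure (FullData p)).map Y1c) {y} = 0) ∧
  (∀ y : ℝ, ((P : Measure (FullData p)).map Y0c) {y} = 0)

/-- The strong-ignorability class `P_SI ⊆ E`: `(Y(1), Y(0)) ⫫ T | X`. -/
def memPSI {p : ℕ} (P : ProbabilityMeasure (FullData p)) : Prop :=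
  memE P ∧
    CondIndepFun (mX p) (mX_le p) (fun ω => (Y1c ω, Y0c ω)) Tc
      (P : Measure (FullData p))


/-- The observed-data sample space: one observed unit is `(X, T, Y)`. -/
abbrev Obs (p : ℕ) : Type := (Fin p → ℝ) × Bool × ℝ

/-- The observed data of a unit: `(X, T, Y)` with `Y = T·Y(1) + (1 - T)·Y(0)`. -/
def obs {p : ℕ} (ω : FullData p) : Obs p :=
  (ω.1, ω.2.2.2, if ω.2.2.2 then ω.2.1 else ω.2.2.1)

/-- Joint law of `n + 1` i.i.d. full-data observations from `P`
(the first `n` units are the study sample, the last one is the test unit). -/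
def jointLaw {p : ℕ} (n : ℕ) (P : ProbabilityMeasure (FullData p)) :
    Measure (Fin (n + 1) → FullData p) :=
  Measure.pi fun _ : Fin (n + 1) => (P : Measure (FullData p))

/-- The observed data `O_n` extracted from `n + 1` full-data points. -/
def obsData {p : ℕ} (n : ℕ) (ω : Fin (n + 1) → FullData p) : Fin n → Obs p :=
  fun i => obs (ω i.castSucc)

/-- Covariates `X` of the test unit. -/
def testX {p : ℕ} (n : ℕ) (ω : Fin (n + 1) → FullData p) : Fin p → ℝ :=
  Xc (ω (Fin.last n))

/-- Individual treatment effect `Δ = Y(1) - Y(0)` of the test unit. -/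
def testITE {p : ℕ} (n : ℕ) (ω : Fin (n + 1) → FullData p) : ℝ :=
  Y1c (ω (Fin.last n)) - Y0c (ω (Fin.last n))

open scoped ENNReal

/-! Conditioning on `{T = h(X)}` makes `T` a function of `X`, which forces strong ignorability, so
the validity hypothesis controls every `P[· | T = h(X)]`. Let `h` be a uniformly random labelling of
the cells of a fine partition of covariate space. As the law of `X` has no atoms, the `n + 1` sample
points fall into distinct cells except on an event of vanishing probability, and then exactly a
fraction `2 ^ -(n + 1)` of the labellings agree with the observed treatments, whatever these are.
Averaging over `h` therefore recovers the original `P`, and validity over `P_SI` extends to `E`.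
Replacing the missing potential outcome by the one making the treatment effect equal to `y` stays in
`E` and does not change the observed data, so each fixed `y` is covered; Fubini and Fatou turn this
into infinite expected length. -/

section DoubleCounting

variable {Ω γ : Type*} [MeasurableSpace Ω] [Fintype γ]

open Classical in
lemma setLIntegral_card_filter_mem (ρ : Measure Ω) {S : γ → Set Ω}
    (hS : ∀ g, MeasurableSet (S g)) (A : Set Ω) :
    ∫⁻ ω in A, (Finset.card {g | ω ∈ S g} : ℝ≥0∞) ∂ρ = ∑ g, ρ (A ∩ S g) := by
  have hcard (ω : Ω) :
      (Finset.card {g | ω ∈ S g} : ℝ≥0∞) = ∑ g, (S g).indicator 1 ω := by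
    simp [Set.indicator_apply]
  simp_rw [hcard]
  rw [lintegral_finsetSum _ fun g _ => measurable_one.indicator (hS g)]
  refine Finset.sum_congr rfl fun g _ => ?_
  rw [lintegral_indicator_one (hS g), Measure.restrict_apply (hS g), Set.inter_comm]

open Classical in
lemma measure_le_of_card_filter_mem_mul_eq [Nonempty γ] (ρ : Measure Ω) [IsProbabilityMeasure ρ]
    {S : γ → Set Ω} (hS : ∀ g, MeasurableSet (S g)) {D : Set Ω} (hD : MeasurableSet D) {r : ℕ}
    (hr : ∀ ω ∈ D, Finset.card {g | ω ∈ S g} * r = Fintype.card γ) {A : Set Ω}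
    (hA : MeasurableSet A) {s : ℝ≥0∞} (hs : ∀ g, ρ (A ∩ S g) ≤ s * ρ (S g)) :
    ρ A ≤ s * (1 + ρ Dᶜ * r) + ρ Dᶜ := by
  let N (ω : Ω) : ℝ≥0∞ := (Finset.card {g | ω ∈ S g} : ℝ≥0∞)
  let M : ℝ≥0∞ := (Fintype.card γ : ℝ≥0∞)
  have hconst {B : Set Ω} (hB : MeasurableSet B) (hBD : B ⊆ D) :
      (∫⁻ ω in B, N ω ∂ρ) * r = M * ρ B := by
    rw [← lintegral_mul_const' (r : ℝ≥0∞) N (ENNReal.natCast_ne_top r), ← setLIntegral_const]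
    exact setLIntegral_congr_fun hB fun ω hω => by
      simpa only [N, M, ← Nat.cast_mul] using congrArg Nat.cast (hr ω (hBD hω))
  have hlower : M * ρ (A ∩ D) ≤ (∫⁻ ω in A, N ω ∂ρ) * r := by
    rw [← hconst (hA.inter hD) Set.inter_subset_right]
    gcongr
    exact Set.inter_subset_left
  have havg : ∫⁻ ω in A, N ω ∂ρ ≤ s * ∫⁻ ω, N ω ∂ρ := by
    calc ∫⁻ ω in A, N ω ∂ρ = ∑ g, ρ (A ∩ S g) := setLIntegral_card_filter_mem ρ hS A
      _ ≤ ∑ g, s * ρ (Set.univ ∩ S g) := by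
        simpa only [Set.univ_inter] using Finset.sum_le_sum fun g _ => hs g
      _ = s * ∫⁻ ω, N ω ∂ρ := by
        rw [← Finset.mul_sum, ← setLIntegral_card_filter_mem ρ hS, setLIntegral_univ]
  have hupper : (∫⁻ ω, N ω ∂ρ) * r ≤ M * (1 + ρ Dᶜ * r) := by
    calc (∫⁻ ω, N ω ∂ρ) * r
        = (∫⁻ ω in D, N ω ∂ρ) * r + (∫⁻ ω in Dᶜ, N ω ∂ρ) * r := by
          rw [← add_mul, lintegral_add_compl _ hD]
      _ ≤ M * 1 + (∫⁻ _ in Dᶜ, M ∂ρ) * r := by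
          rw [hconst hD subset_rfl]
          gcongr with ω
          · exact prob_le_one
          · exact Nat.cast_le.2 (Finset.card_le_univ _)
      _ = M * (1 + ρ Dᶜ * r) := by rw [setLIntegral_const, mul_assoc, mul_add]
  have hAD : ρ (A ∩ D) ≤ s * (1 + ρ Dᶜ * r) := by
    have hM : M ≠ 0 := Nat.cast_ne_zero.2 Fintype.card_ne_zero
    rw [← ENNReal.mul_le_mul_iff_right hM (ENNReal.natCast_ne_top _)]
    calc M * ρ (A ∩ D) ≤ (∫⁻ ω in A, N ω ∂ρ) * r := hlower
      _ ≤ s * (∫⁻ ω, N ω ∂ρ) * r := by gcongr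
      _ ≤ M * (s * (1 + ρ Dᶜ * r)) := by
        rw [mul_assoc, mul_left_comm M]
        gcongr
  calc ρ A ≤ ρ (A ∩ D) + ρ (A \ D) := measure_le_inter_add_sdiff _ _ _
    _ ≤ s * (1 + ρ Dᶜ * r) + ρ Dᶜ := add_le_add hAD (measure_mono fun _ h => h.2)

lemma card_filter_forall_eq_mul_of_injective {ι κ τ : Type*} [Fintype ι] [Fintype κ] [Fintype τ]
    [DecidableEq κ] [DecidableEq τ] {c : ι → κ} (hc : Function.Injective c) (t : ι → τ) :
    Finset.card {g : κ → τ | ∀ i, t i = g (c i)} * Fintype.card τ ^ Fintype.card ι =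
      Fintype.card (κ → τ) := by
  have hpi : Finset.card {g : κ → τ | ∀ i, t i = g (c i)} =
      ∏ k, Finset.card {b | ∀ i, c i = k → t i = b} := by
    rw [← Fintype.card_piFinset]
    congr 1
    ext g
    simp [Fintype.mem_piFinset, forall_comm (α := κ)]
  have hfactor (k : κ) : Finset.card {b | ∀ i, c i = k → t i = b} *
      ∏ i with c i = k, Fintype.card τ = Fintype.card τ := by
    by_cases hk : ∃ i, c i = k
    · obtain ⟨i, rfl⟩ := hk
      have hcell : ({j | c j = c i} : Finset ι) = {i} := by
        ext j
        simp [hc.eq_iff]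
      rw [hcell]
      simp [hc.eq_iff, Finset.filter_eq]
    · push Not at hk
      simp [hk]
  calc _ = ∏ k, (Finset.card {b | ∀ i, c i = k → t i = b} * ∏ i with c i = k, Fintype.card τ) := by
        rw [Finset.prod_mul_distrib, ← hpi, Finset.prod_fiberwise]
        simp
    _ = ∏ _k : κ, Fintype.card τ := Finset.prod_congr rfl fun k _ => hfactor k
    _ = Fintype.card (κ → τ) := by simp

end DoubleCounting

section RandomSamples

variable {Ω E : Type*} [MeasurableSpace Ω] [MeasurableSpace E]

lemma tendsto_measure_compl_of_ae_eventually_mem {κ : Type*} {l : Filter κ}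
    [l.IsCountablyGenerated] (ρ : Measure Ω) [IsFiniteMeasure ρ] {D : κ → Set Ω}
    (hD : ∀ k, MeasurableSet (D k)) (h : ∀ᵐ ω ∂ρ, ∀ᶠ k in l, ω ∈ D k) :
    Tendsto (fun k => ρ (D k)ᶜ) l (nhds 0) := by
  rw [← measure_empty (μ := ρ)]
  refine tendsto_measure_of_ae_tendsto_indicator_of_isFiniteMeasure l .empty
    (fun k => (hD k).compl) ?_
  filter_upwards [h] with ω hω
  filter_upwards [hω] with k hk
  simp [hk]

lemma ae_ne_of_indepFun [MeasurableEq E] {μ : Measure Ω} [IsFiniteMeasure μ] {X Y : Ω → E}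
    (hXY : IndepFun X Y μ) (hX : AEMeasurable X μ) (hY : AEMeasurable Y μ)
    [NullSingletonClass (μ.map Y)] : ∀ᵐ ω ∂μ, X ω ≠ Y ω := by
  have hdiag : ((μ.map X).prod (μ.map Y)) (Set.diagonal E) = 0 := by
    rw [Measure.measure_prod_null measurableSet_diagonal]
    refine ae_of_all _ fun x => ?_
    have hx : Prod.mk x ⁻¹' Set.diagonal E = {x} := by ext; simp [eq_comm]
    simp [hx]
  rw [← (indepFun_iff_map_prod_eq_prod_map_map hX hY).1 hXY,
    Measure.map_apply_of_aemeasurable (hX.prodMk hY) measurableSet_diagonal] at hdiag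
  exact measure_eq_zero_iff_ae_notMem.1 hdiag

lemma ae_injective_of_iIndepFun [MeasurableEq E] {ι : Type*} [Countable ι] {μ : Measure Ω}
    [IsFiniteMeasure μ] {X : ι → Ω → E} (hX : ∀ i, AEMeasurable (X i) μ) (hind : iIndepFun X μ)
    [∀ i, NullSingletonClass (μ.map (X i))] : ∀ᵐ ω ∂μ, Function.Injective fun i => X i ω := by
  have hne : ∀ᵐ ω ∂μ, ∀ i j, i ≠ j → X i ω ≠ X j ω := by
    simp only [ae_all_iff]
    exact fun i j hij => ae_ne_of_indepFun (hind.indepFun hij) (hX i) (hX j)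
  filter_upwards [hne] with ω hω i j
  exact not_imp_not.1 (hω i j)

lemma pi_cond {ι : Type*} [Fintype ι] {Ω : ι → Type*} [∀ i, MeasurableSpace (Ω i)]
    (μ : ∀ i, Measure (Ω i)) [∀ i, IsFiniteMeasure (μ i)] (S : ∀ i, Set (Ω i)) :
    Measure.pi (fun i => (μ i)[|S i]) = (Measure.pi μ)[|Set.univ.pi S] := by
  refine Measure.pi_eq fun s _ => ?_
  simp only [ProbabilityTheory.cond, Measure.restrict_pi_pi, Measure.smul_apply, Measure.pi_pi,
    smul_eq_mul]
  rw [Finset.prod_mul_distrib, ENNReal.prod_inv_distrib]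
  exact fun i _ j _ _ => .inr (measure_ne_top _ _)

lemma pi_inter_pi_le_mul_of_pi_cond_le {ι : Type*} [Fintype ι] [Nonempty ι] {μ : Measure Ω}
    [IsFiniteMeasure μ] {S : Set Ω} (hS : MeasurableSet S) {A : Set (ι → Ω)} {s : ℝ≥0∞}
    (h : μ S ≠ 0 → Measure.pi (fun _ : ι => μ[|S]) A ≤ s) :
    Measure.pi (fun _ : ι => μ) (A ∩ Set.univ.pi fun _ => S) ≤
      s * Measure.pi (fun _ : ι => μ) (Set.univ.pi fun _ => S) := by
  rw [Set.inter_comm, ← cond_mul_eq_inter (.univ_pi fun _ => hS), ← pi_cond]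
  by_cases h0 : μ S = 0
  · simp [h0]
  · gcongr
    exact h h0

end RandomSamples

section NoFreeLunch

variable {E : Type*} [MeasurableSpace E] [MeasurableSpace.CountablyGenerated E]

/-- The cell containing `x` in the partition of `E` generated by the first `k` sets of a countable
generating family, encoded by its memberships in these sets. -/
def cell (k : ℕ) (x : E) : Fin k → Bool := fun i => MeasurableSpace.mapNatBool E x i

lemma measurable_cell (k : ℕ) : Measurable (cell (E := E) k) :=
  measurable_pi_lambda _ fun i =>
    (measurable_pi_apply (i : ℕ)).comp (MeasurableSpace.measurable_mapNatBool E)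

lemma eventually_cell_ne [MeasurableSpace.SeparatesPoints E] {x y : E} (h : x ≠ y) :
    ∀ᶠ k in atTop, cell k x ≠ cell k y := by
  obtain ⟨m, hm⟩ := Function.ne_iff.1 ((MeasurableSpace.injective_mapNatBool E).ne h)
  filter_upwards [eventually_gt_atTop m] with k hk heq
  exact hm (congrFun heq ⟨m, hk⟩)

lemma eventually_injective_cell [MeasurableSpace.SeparatesPoints E] {ι : Type*} [Finite ι]
    {x : ι → E} (hx : Function.Injective x) :
    ∀ᶠ k in atTop, Function.Injective fun i => cell k (x i) := by
  have hne : ∀ᶠ k in atTop, ∀ i j, i ≠ j → cell k (x i) ≠ cell k (x j) := by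
    simp only [eventually_all]
    exact fun i j hij => eventually_cell_ne (hx.ne hij)
  filter_upwards [hne] with k hk i j
  exact not_imp_not.1 (hk i j)

variable {Ω τ ι : Type*} [MeasurableSpace Ω] {Z : Ω → E}

lemma measurableSet_injective_cell [Finite ι] (hZ : Measurable Z) (k : ℕ) :
    MeasurableSet {ω : ι → Ω | Function.Injective fun i => cell k (Z (ω i))} := by
  have hcells : Measurable fun (ω : ι → Ω) i => cell k (Z (ω i)) := by
    have := measurable_cell (E := E) k
    fun_prop
  exact hcells (MeasurableSet.of_discrete (s := {f | Function.Injective f}))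

variable [Fintype ι] {μ : Measure Ω} [IsProbabilityMeasure μ]

lemma tendsto_pi_compl_injective_cell [MeasurableEq E] (hZ : Measurable Z)
    [NullSingletonClass (μ.map Z)] :
    Tendsto
      (fun k => Measure.pi (fun _ : ι => μ) {ω | Function.Injective fun i => cell k (Z (ω i))}ᶜ)
      atTop (nhds 0) := by
  have hmap (i : ι) : (Measure.pi fun _ : ι => μ).map (fun ω => Z (ω i)) = μ.map Z := by
    calc _ = ((Measure.pi fun _ : ι => μ).map fun ω => ω i).map Z :=
          (Measure.map_map hZ (measurable_pi_apply i)).symm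
      _ = μ.map Z := congrArg (Measure.map Z) (measurePreserving_eval _ i).map_eq
  have (i : ι) : NullSingletonClass ((Measure.pi fun _ : ι => μ).map fun ω => Z (ω i)) := by
    rw [hmap i]
    infer_instance
  have hinj : ∀ᵐ ω ∂Measure.pi (fun _ : ι => μ), Function.Injective fun i => Z (ω i) :=
    ae_injective_of_iIndepFun (fun i => (hZ.comp (measurable_pi_apply i)).aemeasurable)
      (iIndepFun_pi fun _ => hZ.aemeasurable)
  exact tendsto_measure_compl_of_ae_eventually_mem _ (measurableSet_injective_cell hZ)
    (hinj.mono fun ω hω => eventually_injective_cell hω)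

lemma pi_le_of_forall_pi_cond_eq_le [MeasurableEq E] [Nonempty ι]
    [Finite τ] [MeasurableSpace τ] [MeasurableSingletonClass τ]
    (hZ : Measurable Z) [NullSingletonClass (μ.map Z)] {T : Ω → τ} (hT : Measurable T)
    {A : Set (ι → Ω)} (hA : MeasurableSet A) {s : ℝ≥0∞}
    (hs : ∀ h : E → τ, Measurable h → μ {ω | T ω = h (Z ω)} ≠ 0 →
      Measure.pi (fun _ : ι => μ[|{ω | T ω = h (Z ω)}]) A ≤ s) :
    Measure.pi (fun _ : ι => μ) A ≤ s := by
  classical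
  cases nonempty_fintype τ
  obtain rfl | hs_top := eq_or_ne s ∞
  · exact le_top
  set ρ := Measure.pi fun _ : ι => μ
  set D : ℕ → Set (ι → Ω) := fun k => {ω | Function.Injective fun i => cell k (Z (ω i))}
  have : Nonempty τ := (nonempty_of_isProbabilityMeasure μ).map T
  have hbound (k : ℕ) :
      ρ A ≤ s * (1 + ρ (D k)ᶜ * (Fintype.card τ ^ Fintype.card ι : ℕ)) + ρ (D k)ᶜ := by
    have hlabel (g : (Fin k → Bool) → τ) : Measurable fun x : E => g (cell k x) :=
      (measurable_of_countable g).comp (measurable_cell k)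
    have hagree (g : (Fin k → Bool) → τ) : MeasurableSet {ω | T ω = g (cell k (Z ω))} :=
      measurableSet_eq_fun hT ((hlabel g).comp hZ)
    refine measure_le_of_card_filter_mem_mul_eq ρ
      (fun g => MeasurableSet.univ_pi fun _ => hagree g) (measurableSet_injective_cell hZ k)
      (fun ω hω => ?_) hA
      fun g => pi_inter_pi_le_mul_of_pi_cond_le (hagree g) (hs _ (hlabel g))
    simpa only [Set.mem_univ_pi, Set.mem_ofPred_eq] using
      card_filter_forall_eq_mul_of_injective hω fun i => T (ω i)
  have hD : Tendsto (fun k => ρ (D k)ᶜ) atTop (nhds 0) := tendsto_pi_compl_injective_cell hZ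
  have hlim : Tendsto (fun k => s * (1 + ρ (D k)ᶜ * (Fintype.card τ ^ Fintype.card ι : ℕ)) +
      ρ (D k)ᶜ) atTop (nhds (s * (1 + 0 * (Fintype.card τ ^ Fintype.card ι : ℕ)) + 0)) :=
    (ENNReal.Tendsto.const_mul (tendsto_const_nhds.add
      (ENNReal.Tendsto.mul_const hD (.inr (ENNReal.natCast_ne_top _)))) (.inr hs_top)).add hD
  simpa using ge_of_tendsto' hlim hbound

end NoFreeLunch

section StrongIgnorability

lemma condIndepFun_of_ae_eq_right {Ω β γ : Type*} {m mΩ : MeasurableSpace Ω}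
    [StandardBorelSpace Ω] [MeasurableSpace β] [MeasurableSpace γ] (hm : m ≤ mΩ) {μ : Measure Ω}
    [IsFiniteMeasure μ] {X : Ω → β} {Y Y' : Ω → γ} (hX : Measurable X) (hY' : Measurable[m] Y')
    (hY : Y =ᵐ[μ] Y') : CondIndepFun m hm X Y μ := by
  refine Kernel.IndepFun.congr' (condIndepFun_of_measurable_right hX hY')
    (ae_of_all _ fun _ => ae_eq_rfl) (Measure.ae_ae_of_ae_comp ?_)
  rw [condExpKernel_comp_trim]
  exact hY.symm

variable {p : ℕ}

lemma measurable_Xc_apply (j : Fin p) : Measurable fun ω : FullData p => Xc ω j :=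
  (measurable_pi_apply j).comp measurable_Xc

lemma measurable_Y1c : Measurable (Y1c (p := p)) := by unfold Y1c; fun_prop

lemma measurable_Y0c : Measurable (Y0c (p := p)) := by unfold Y0c; fun_prop

lemma measurable_Tc : Measurable (Tc (p := p)) := by unfold Tc; fun_prop

/-- The subclass of `P_SI` in which the treatment is almost surely a function of the covariates:
the only members of `P_SI` on which the validity of a prediction set is ever used. -/
def memPDet (P : ProbabilityMeasure (FullData p)) : Prop :=
  memE P ∧ ∃ h : (Fin p → ℝ) → Bool, Measurable h ∧
    Tc =ᵐ[(P : Measure (FullData p))] fun ω => h (Xc ω)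

lemma memPDet.memPSI {P : ProbabilityMeasure (FullData p)} (hP : memPDet P) : memPSI P := by
  obtain ⟨hE, h, hh, hT⟩ := hP
  exact ⟨hE, condIndepFun_of_ae_eq_right (mX_le p) (measurable_Y1c.prodMk measurable_Y0c)
    (hh.comp (comap_measurable Xc)) hT⟩

lemma memE.of_absolutelyContinuous {P Q : ProbabilityMeasure (FullData p)} (hQ : memE Q)
    (h : (P : Measure (FullData p)) ≪ (Q : Measure (FullData p))) : memE P := by
  obtain ⟨⟨j, hj⟩, h1, h0⟩ := hQ
  exact ⟨⟨j, (h.map (measurable_Xc_apply j)).trans hj⟩, fun y => h.map measurable_Y1c (h1 y),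
    fun y => h.map measurable_Y0c (h0 y)⟩

lemma memE.nullSingletonClass_map_Xc {P : ProbabilityMeasure (FullData p)} (hP : memE P) :
    NullSingletonClass ((P : Measure (FullData p)).map Xc) := by
  obtain ⟨j, hj⟩ := hP.1
  refine ⟨fun x => ?_⟩
  have hcoord : (P : Measure (FullData p)) ((fun ω => Xc ω j) ⁻¹' {x j}) = 0 := by
    rw [← Measure.map_apply (measurable_Xc_apply j) (measurableSet_singleton (x j))]
    exact hj Real.volume_singleton
  rw [Measure.map_apply measurable_Xc (measurableSet_singleton x)]
  exact measure_mono_null (fun ω hω => congrFun hω j) hcoord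

lemma jointLaw_le_of_forall_memPDet {n : ℕ} {Q : ProbabilityMeasure (FullData p)} (hQ : memE Q)
    {A : Set (Fin (n + 1) → FullData p)} (hA : MeasurableSet A) {s : ℝ≥0∞}
    (hs : ∀ P, memPDet P → jointLaw n P A ≤ s) : jointLaw n Q A ≤ s := by
  have := hQ.nullSingletonClass_map_Xc
  refine pi_le_of_forall_pi_cond_eq_le measurable_Xc measurable_Tc hA fun h hh h0 => ?_
  have hagree : MeasurableSet {ω : FullData p | Tc ω = h (Xc ω)} :=
    measurableSet_eq_fun measurable_Tc (hh.comp measurable_Xc)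
  exact hs ⟨_, cond_isProbabilityMeasure h0⟩
    ⟨hQ.of_absolutelyContinuous cond_absolutelyContinuous, h, hh, ae_cond_mem hagree⟩

end StrongIgnorability

section Imputation

variable {p : ℕ}

/-- Replace the unobserved potential outcome so that the treatment effect equals `y`. -/
def impute (y : ℝ) (ω : FullData p) : FullData p :=
  (Xc ω, if Tc ω then Y1c ω else Y0c ω + y, if Tc ω then Y1c ω - y else Y0c ω, Tc ω)

lemma obs_impute (y : ℝ) (ω : FullData p) : obs (impute y ω) = obs ω := by
  obtain ⟨x, y1, y0, t⟩ := ω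
  cases t <;> rfl

lemma Y1c_impute_sub_Y0c_impute (y : ℝ) (ω : FullData p) :
    Y1c (impute y ω) - Y0c (impute y ω) = y := by
  obtain ⟨x, y1, y0, t⟩ := ω
  cases t <;> simp [impute, Y1c, Y0c, Tc]

lemma measurable_impute (y : ℝ) : Measurable (impute (p := p) y) := by
  have hT : MeasurableSet {ω : FullData p | Tc ω = true} :=
    measurable_Tc (measurableSet_singleton true)
  exact measurable_Xc.prodMk
    ((Measurable.ite hT measurable_Y1c (measurable_Y0c.add_const y)).prodMk
      ((Measurable.ite hT (measurable_Y1c.sub_const y) measurable_Y0c).prodMk measurable_Tc))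

lemma memE.map_impute {P : ProbabilityMeasure (FullData p)} (hP : memE P) (y : ℝ) :
    memE (P.map (measurable_impute y).aemeasurable) := by
  obtain ⟨⟨j, hj⟩, h1, h0⟩ := hP
  have hnull {f : FullData p → ℝ} (hf : Measurable f)
      (h : ∀ v, ∃ u w, f ∘ impute y ⁻¹' {v} ⊆ Y1c ⁻¹' {u} ∪ Y0c ⁻¹' {w}) (v : ℝ) :
      ((P : Measure (FullData p)).map (impute y)).map f {v} = 0 := by
    obtain ⟨u, w, huw⟩ := h v
    rw [Measure.map_map hf (measurable_impute y),
      Measure.map_apply (hf.comp (measurable_impute y)) (measurableSet_singleton v)]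
    refine measure_mono_null huw (measure_union_null ?_ ?_)
    · rw [← Measure.map_apply measurable_Y1c (measurableSet_singleton u), h1]
    · rw [← Measure.map_apply measurable_Y0c (measurableSet_singleton w), h0]
  rw [memE, ProbabilityMeasure.toMeasure_map]
  refine ⟨⟨j, ?_⟩, hnull measurable_Y1c fun v => ⟨v, v - y, ?_⟩,
    hnull measurable_Y0c fun v => ⟨v + y, v, ?_⟩⟩
  · rwa [Measure.map_map (measurable_Xc_apply j) (measurable_impute y)]
  all_goals
    rintro ⟨x, y1, y0, t⟩ h
    cases t <;> simp_all [impute, Y1c, Y0c, Tc, eq_sub_iff_add_eq, sub_eq_iff_eq_add]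

end Imputation

section ExpectedSize

lemma tendsto_lintegral_measure_of_limsup_notMem_le {E : Type*} [MeasurableSpace E] (ν : Measure E)
    [SFinite ν] (hν : ν Set.univ = ∞) {Ω : ℕ → Type*} [∀ n, MeasurableSpace (Ω n)]
    (μ : ∀ n, Measure (Ω n)) [∀ n, IsProbabilityMeasure (μ n)] {C : ∀ n, Ω n → Set E}
    (hC : ∀ n, MeasurableSet {q : Ω n × E | q.2 ∈ C n q.1}) {a : ℝ≥0∞} (ha : a < 1)
    (h : ∀ y, limsup (fun n => μ n {ω | y ∉ C n ω}) atTop ≤ a) :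
    Tendsto (fun n => ∫⁻ ω, ν (C n ω) ∂μ n) atTop (nhds ∞) := by
  have hfubini (n : ℕ) : ∫⁻ ω, ν (C n ω) ∂μ n = ∫⁻ y, μ n {ω | y ∈ C n ω} ∂ν :=
    (Measure.prod_apply (hC n)).symm.trans (Measure.prod_apply_symm (hC n))
  have hcompl (n : ℕ) (y : E) : μ n {ω | y ∈ C n ω} = 1 - μ n {ω | y ∉ C n ω} :=
    ENNReal.eq_sub_of_add_eq (measure_ne_top _ _)
      (prob_add_prob_compl (measurable_prodMk_right (hC n)))
  have hcover (y : E) : 1 - a ≤ liminf (fun n => μ n {ω | y ∈ C n ω}) atTop := by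
    simp_rw [hcompl]
    rw [ENNReal.liminf_const_sub _ _ ENNReal.one_ne_top]
    exact tsub_le_tsub_left (h y) 1
  have hliminf : ∞ ≤ liminf (fun n => ∫⁻ ω, ν (C n ω) ∂μ n) atTop := by
    calc ∞ = ∫⁻ _, 1 - a ∂ν := by
          rw [lintegral_const, hν, ENNReal.mul_top (tsub_pos_of_lt ha).ne']
      _ ≤ ∫⁻ y, liminf (fun n => μ n {ω | y ∈ C n ω}) atTop ∂ν := lintegral_mono hcover
      _ ≤ liminf (fun n => ∫⁻ y, μ n {ω | y ∈ C n ω} ∂ν) atTop :=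
        lintegral_liminf_le fun n => measurable_measure_prodMk_right (hC n)
      _ = liminf (fun n => ∫⁻ ω, ν (C n ω) ∂μ n) atTop := by simp_rw [hfubini]
  exact tendsto_of_le_liminf_of_limsup_le hliminf le_top

end ExpectedSize

section Impossibility

variable {p : ℕ}

lemma measurable_obs : Measurable (obs (p := p)) :=
  measurable_Xc.prodMk (measurable_Tc.prodMk
    (Measurable.ite (measurable_Tc (measurableSet_singleton true)) measurable_Y1c measurable_Y0c))

lemma measurable_obsData (n : ℕ) : Measurable (obsData (p := p) n) :=
  measurable_pi_lambda _ fun _ => measurable_obs.comp (measurable_pi_apply _)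

lemma measurable_testX (n : ℕ) : Measurable (testX (p := p) n) :=
  measurable_Xc.comp (measurable_pi_apply _)

lemma measurable_testITE (n : ℕ) : Measurable (testITE (p := p) n) :=
  (measurable_Y1c.sub measurable_Y0c).comp (measurable_pi_apply (Fin.last n))

instance (n : ℕ) (P : ProbabilityMeasure (FullData p)) : IsProbabilityMeasure (jointLaw n P) := by
  unfold jointLaw
  infer_instance

lemma jointLaw_map_impute (n : ℕ) (P : ProbabilityMeasure (FullData p)) (y : ℝ) :
    jointLaw n (P.map (measurable_impute y).aemeasurable) =
      (jointLaw n P).map fun ω i => impute y (ω i) := by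
  simp only [jointLaw, ProbabilityMeasure.toMeasure_map]
  have := Measure.isProbabilityMeasure_map (μ := (P : Measure (FullData p)))
    (measurable_impute y).aemeasurable
  exact (Measure.pi_map_pi fun _ => (measurable_impute y).aemeasurable).symm

lemma noncoverage_le_iSup {𝒬 : ProbabilityMeasure (FullData p) → Prop}
    (h𝒬 : ∀ P, memPDet P → 𝒬 P) {n : ℕ} {C : (Fin n → Obs p) → (Fin p → ℝ) → Set ℝ}
    (hC : MeasurableSet {q : (Fin n → Obs p) × (Fin p → ℝ) × ℝ | q.2.2 ∈ C q.1 q.2.1})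
    {P : ProbabilityMeasure (FullData p)} (hP : memE P) (y : ℝ) :
    jointLaw n P {ω | y ∉ C (obsData n ω) (testX n ω)} ≤
      ⨆ Q : {Q // 𝒬 Q}, jointLaw n Q.1 {ω | testITE n ω ∉ C (obsData n ω) (testX n ω)} := by
  set A := {ω : Fin (n + 1) → FullData p | testITE n ω ∉ C (obsData n ω) (testX n ω)}
  have hA : MeasurableSet A :=
    (hC.preimage ((measurable_obsData n).prodMk
      ((measurable_testX n).prodMk (measurable_testITE n)))).compl
  have hpreimage : (fun ω i => impute y (ω i)) ⁻¹' A =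
      {ω | y ∉ C (obsData n ω) (testX n ω)} := by
    ext ω
    have hobs : obsData n (fun i => impute y (ω i)) = obsData n ω :=
      funext fun i => obs_impute y (ω i.castSucc)
    have hITE : testITE n (fun i => impute y (ω i)) = y := Y1c_impute_sub_Y0c_impute y _
    have hX : testX n (fun i => impute y (ω i)) = testX n ω := rfl
    simp only [A, Set.mem_preimage, Set.mem_ofPred_eq, hobs, hITE, hX]
  have himpute : Measurable fun (ω : Fin (n + 1) → FullData p) i => impute y (ω i) :=
    measurable_pi_lambda _ fun i => (measurable_impute y).comp (measurable_pi_apply i)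
  rw [← hpreimage, ← Measure.map_apply himpute hA, ← jointLaw_map_impute]
  exact jointLaw_le_of_forall_memPDet (hP.map_impute y) hA fun Q hQ =>
    le_iSup (fun Q : {Q // 𝒬 Q} => jointLaw n Q.1 A) ⟨Q, h𝒬 Q hQ⟩

theorem asymptotic_impossibility_general {𝒬 : ProbabilityMeasure (FullData p) → Prop}
    (h𝒬 : ∀ P, memPDet P → 𝒬 P) (C : (n : ℕ) → (Fin n → Obs p) → (Fin p → ℝ) → Set ℝ)
    (hC : ∀ n, MeasurableSet
      {q : (Fin n → Obs p) × (Fin p → ℝ) × ℝ | q.2.2 ∈ C n q.1 q.2.1})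
    {α : ℝ≥0∞} (hα : α < 1)
    (hcov : limsup (fun n => ⨆ P : {P // 𝒬 P},
      jointLaw n P.1 {ω | testITE n ω ∉ C n (obsData n ω) (testX n ω)}) atTop ≤ α)
    {P : ProbabilityMeasure (FullData p)} (hP : memE P) :
    (∀ y : ℝ, limsup (fun n => jointLaw n P {ω | y ∉ C n (obsData n ω) (testX n ω)}) atTop ≤ α) ∧
      Tendsto (fun n => ∫⁻ ω, volume (C n (obsData n ω) (testX n ω)) ∂(jointLaw n P))
        atTop (nhds ∞) := by
  have hmiss (y : ℝ) :
      limsup (fun n => jointLaw n P {ω | y ∉ C n (obsData n ω) (testX n ω)}) atTop ≤ α :=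
    (limsup_le_limsup (.of_forall fun n => noncoverage_le_iSup h𝒬 (hC n) hP y)).trans hcov
  have hmeas (n : ℕ) : MeasurableSet
      {q : (Fin (n + 1) → FullData p) × ℝ | q.2 ∈ C n (obsData n q.1) (testX n q.1)} :=
    (hC n).preimage (((measurable_obsData n).comp measurable_fst).prodMk
      (((measurable_testX n).comp measurable_fst).prodMk measurable_snd))
  exact ⟨hmiss, tendsto_lintegral_measure_of_limsup_notMem_le volume Real.volume_univ _ hmeas hα
    hmiss⟩

end Impossibility

/-- If a sequence of prediction sets `{Ĉ_{n,α}}` satisfies the asymptotic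
distribution-free validity `limsup_{n→∞} sup_{P ∈ P_SI} P_P(Δ ∉ Ĉ_{n,α}(X)) ≤ α` for some
`α ∈ (0,1)`, then for every `P ∈ P_SI` and every `y ∈ ℝ`,
`limsup_{n→∞} P_P(y ∉ Ĉ_{n,α}(X)) ≤ α`, and hence
`lim_{n→∞} E_P[length(Ĉ_{n,α}(X))] = ∞`. -/
theorem asymptotic_impossibility {p : ℕ}
    (C : (n : ℕ) → (Fin n → Obs p) → (Fin p → ℝ) → Set ℝ)
    (hC : ∀ n, MeasurableSet
      {q : (Fin n → Obs p) × (Fin p → ℝ) × ℝ | q.2.2 ∈ C n q.1 q.2.1})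
    (α : ℝ) (hα : α ∈ Set.Ioo (0 : ℝ) 1)
    (hcov : Filter.limsup
        (fun n => ⨆ P : {P : ProbabilityMeasure (FullData p) // memPSI P},
          jointLaw n P.1 {ω | testITE n ω ∉ C n (obsData n ω) (testX n ω)})
        Filter.atTop ≤ ENNReal.ofReal α) :
    ∀ P : ProbabilityMeasure (FullData p), memPSI P →
      (∀ y : ℝ,
        Filter.limsup
          (fun n => jointLaw n P {ω | y ∉ C n (obsData n ω) (testX n ω)})
          Filter.atTop ≤ ENNReal.ofReal α) ∧
      Filter.Tendsto
        (fun n => ∫⁻ ω, volume (C n (obsData n ω) (testX n ω)) ∂(jointLaw n P))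
        Filter.atTop (nhds ⊤) :=
  fun _ hP => asymptotic_impossibility_general (fun _ => memPDet.memPSI) C hC
    (ENNReal.ofReal_lt_one.2 hα.2) hcov hP.1

end
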